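/- arXiv:1806.01961 — 9 statements merged into one kernel-verified Lean document; each statement's English description precedes it below -/
import Mathlib

section
/- Let A and G be abelian groups and let f : A → G be a pointed map of degree 2 which is anti-symmetric. If A has exponent c (i.e., c·x = 0 for all x ∈ A), then c·f(x) = 0 for all x ∈ A. -/
/-!
Taking `(x, x, -x)` in the degree 2 identity gives `f (2x) = 2 f x` by anti-symmetry. Taking
`(nx, x, x)` then gives `f ((n+2)x) = 2 f ((n+1)x) - f (nx)`, so `f (nx) = n f x` for every
natural `n`; for `n = c` the left side is `f 0 = 0`.
-/

/-- If `f : A → G` is an anti-symmetric pointed map of degree 2 between abelian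
groups and `A` has exponent `c` (i.e. `c • x = 0` for all `x`), then
`c • f x = 0` for all `x`. -/
theorem pointed_map_degree_two_antisymm_exponent
    (A G : Type*) [AddCommGroup A] [AddCommGroup G] (f : A → G)
    (hdeg : ∀ x₁ x₂ x₃ : A,
      f (x₁ + x₂ + x₃) - f (x₁ + x₂) - f (x₁ + x₃) - f (x₂ + x₃)
        + f x₁ + f x₂ + f x₃ = 0)
    (hanti : ∀ x : A, f (-x) = -f x)
    (c : ℕ) (hc : ∀ x : A, c • x = 0) :
    ∀ x : A, c • f x = 0 := by
  intro x
  have h0 : f 0 = 0 := by simpa using hdeg 0 0 0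
  have h2 : f (x + x) = f x + f x := by
    have h := hdeg x x (-x)
    simp only [add_neg_cancel_right, add_neg_cancel, h0, hanti] at h
    rw [← sub_eq_zero, ← neg_eq_zero, ← h]
    abel
  have key : ∀ n : ℕ, f (n • x) = n • f x ∧ f ((n + 1) • x) = (n + 1) • f x := by
    intro n
    induction n with
    | zero => simp [h0]
    | succ n ih =>
      refine ⟨ih.2, ?_⟩
      have h := hdeg (n • x) x x
      rw [← succ_nsmul, ← succ_nsmul, h2, ih.1, ih.2] at h
      rw [← sub_eq_zero, ← h]
      simp only [succ_nsmul]
      abel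
  rw [← (key c).1, hc, h0]
end

section
/- Let A and G be abelian groups and let f : A → G be a pointed map of degree 2 (no anti-symmetry assumed). Then for every natural number n and every x ∈ A, 2·f(n·x) = n·(n+1)·f(x) + n·(n−1)·f(−x); equivalently, f(n·x) = (n(n+1)/2)·f(x) + (n(n−1)/2)·f(−x), where n(n+1)/2 and n(n−1)/2 are the (integer) binomial coefficients. -/
/-!
Taking all arguments zero gives `f 0 = 0`. Applying the degree 2 identity to `(n + 1) • x`, `x`, `-x`
then yields the second-order recurrence
`f ((n + 2) • x) = 2 f ((n + 1) • x) - f (n • x) + f x + f (-x)`,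
and the binomial formula satisfies the same recurrence with the same values at `n = 0, 1`.
The formula for `2 • f (n • x)` follows by doubling.
-/

/-- If `f : A → G` is a pointed map of degree 2 between abelian groups (no
anti-symmetry assumed), then for every natural number `n` and every `x`,
`2 • f (n • x) = (n*(n+1)) • f x + (n*(n-1)) • f (-x)`; equivalently,
`f (n • x) = (n+1).choose 2 • f x + n.choose 2 • f (-x)`, where the binomial
coefficients are `n(n+1)/2` and `n(n-1)/2`. -/
theorem pointed_map_degree_two_mumford
    (A G : Type*) [AddCommGroup A] [AddCommGroup G] (f : A → G)
    (hdeg : ∀ x₁ x₂ x₃ : A,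
      f (x₁ + x₂ + x₃) - f (x₁ + x₂) - f (x₁ + x₃) - f (x₂ + x₃)
        + f x₁ + f x₂ + f x₃ = 0) :
    ∀ (n : ℕ) (x : A),
      2 • f (n • x) = (n * (n + 1)) • f x + (n * (n - 1)) • f (-x) ∧
      f (n • x) = (n + 1).choose 2 • f x + n.choose 2 • f (-x) := by
  intro n x
  have h0 : f 0 = 0 := by
    have h := hdeg 0 0 0
    simpa using h
  have hrec : ∀ m : ℕ,
      f ((m + 2) • x) = 2 • f ((m + 1) • x) - f (m • x) + f x + f (-x) := by
    intro m
    have h := hdeg ((m + 1) • x) x (-x)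
    have e1 : (m + 1) • x + x + -x = (m + 1) • x := by abel
    have e2 : (m + 1) • x + x = (m + 2) • x := by module
    have e3 : (m + 1) • x + -x = m • x := by module
    rw [e1, e2, e3, add_neg_cancel, h0] at h
    rw [← sub_eq_zero, ← neg_eq_zero, ← h]
    abel
  have hch : ∀ m : ℕ, (m + 1).choose 2 = m + m.choose 2 := by
    intro m
    rw [Nat.choose_succ_succ' m 1, Nat.choose_one_right]
  have key : ∀ m : ℕ, f (m • x) = (m + 1).choose 2 • f x + m.choose 2 • f (-x) := by
    intro m
    induction m using Nat.twoStepInduction with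
    | zero => simp [h0]
    | one => simp
    | more m ih₁ ih₂ =>
      rw [hrec, ih₁, ih₂, hch (m + 2), hch (m + 1), hch m]
      module
  have hdouble : ∀ m : ℕ, 2 * m.choose 2 = m * (m - 1) := by
    intro m
    rw [Nat.choose_two_right, Nat.mul_div_cancel' (Nat.even_mul_pred_self m).two_dvd]
  refine ⟨?_, key n⟩
  rw [key, smul_add, smul_smul, smul_smul, hdouble, hdouble, Nat.add_sub_cancel,
    Nat.mul_comm (n + 1) n]
end

section
/- Let G be a finite group, T a finite nonempty principal homogeneous space for G, and Γ a group acting on G by group automorphisms and on T by permutations, compatibly with the G-action on T. Then the number of Γ-orbits on T is at most the number of Γ-orbits on G: |T/Γ| ≤ |G/Γ|. -/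
/-!
The proof is Burnside's lemma applied to both actions. If `γ` fixes some `t₀ : T`, then the map
sending `t` to the unique `g` with `g • t₀ = t` embeds `T^γ` into `G^γ`; otherwise `T^γ` is empty.
Hence `|T^γ| ≤ |G^γ|` for all `γ` (`card_fixedBy_phs_le`). Averaging over `Γ` gives the inequality
of orbit counts; as `Γ` may be infinite, the average is taken over its finite image in
`Perm T × Perm G` (`card_orbits_le_of_card_fixedBy_le`).
-/

open MulAction

/-- If `Γ` acts on `X` through a surjection onto `Q`, then `Γ` and `Q` have equally many
orbits on `X`. -/
lemma card_orbits_eq_of_surjective {Γ Q X : Type*} [Group Γ] [Group Q] [MulAction Γ X]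
    [MulAction Q X] (π : Γ → Q) (hπ : Function.Surjective π)
    (h : ∀ (γ : Γ) (x : X), π γ • x = γ • x) :
    Nat.card (orbitRel.Quotient Γ X) = Nat.card (orbitRel.Quotient Q X) := by
  have hrel : orbitRel Γ X = orbitRel Q X := by
    ext x y
    simp only [orbitRel_apply, mem_orbit_iff, hπ.exists, h]
  unfold orbitRel.Quotient
  rw [hrel]

/-- Comparison of orbit counts by Burnside's lemma. The group `Γ` need not be finite: it acts
through its image in the finite group `Perm X × Perm Y`. -/
lemma card_orbits_le_of_card_fixedBy_le {Γ X Y : Type*} [Group Γ] [Finite X] [Finite Y]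
    [MulAction Γ X] [MulAction Γ Y]
    (h : ∀ γ : Γ, Nat.card (fixedBy X γ) ≤ Nat.card (fixedBy Y γ)) :
    Nat.card (orbitRel.Quotient Γ X) ≤ Nat.card (orbitRel.Quotient Γ Y) := by
  classical
  let f : Γ →* Equiv.Perm X × Equiv.Perm Y := (toPermHom Γ X).prod (toPermHom Γ Y)
  let _ : MulAction f.range X :=
    MulAction.compHom X ((MonoidHom.fst _ _).comp f.range.subtype)
  let _ : MulAction f.range Y :=
    MulAction.compHom Y ((MonoidHom.snd _ _).comp f.range.subtype)
  have hX : ∀ (γ : Γ) (x : X), f.rangeRestrict γ • x = γ • x := fun _ _ => rfl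
  have hY : ∀ (γ : Γ) (y : Y), f.rangeRestrict γ • y = γ • y := fun _ _ => rfl
  have hsurj := f.rangeRestrict_surjective
  rw [card_orbits_eq_of_surjective _ hsurj hX, card_orbits_eq_of_surjective _ hsurj hY]
  have := Fintype.ofFinite X
  have := Fintype.ofFinite Y
  have := Fintype.ofFinite f.range
  have := Fintype.ofFinite (orbitRel.Quotient f.range X)
  have := Fintype.ofFinite (orbitRel.Quotient f.range Y)
  refine Nat.le_of_mul_le_mul_right ?_ (Fintype.card_pos (α := f.range))
  rw [Nat.card_eq_fintype_card, Nat.card_eq_fintype_card,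
    ← sum_card_fixedBy_eq_card_orbits_mul_card_group,
    ← sum_card_fixedBy_eq_card_orbits_mul_card_group]
  refine Finset.sum_le_sum fun q _ => ?_
  obtain ⟨γ, rfl⟩ := hsurj q
  rw [← Nat.card_eq_fintype_card, ← Nat.card_eq_fintype_card]
  exact h γ

lemma card_fixedBy_phs_le {G T Γ : Type*} [Group G] [Finite G] [MulAction G T]
    (hfree : ∀ (g : G) (t : T), g • t = t → g = 1)
    (htrans : ∀ t t' : T, ∃ g : G, g • t = t')
    [Group Γ] [MulDistribMulAction Γ G] [MulAction Γ T]
    (hcompat : ∀ (γ : Γ) (g : G) (t : T), γ • (g • t) = (γ • g) • (γ • t)) (γ : Γ) :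
    Nat.card (fixedBy T γ) ≤ Nat.card (fixedBy G γ) := by
  rcases isEmpty_or_nonempty (fixedBy T γ) with _ | ⟨⟨t₀, ht₀⟩⟩
  · simp
  rw [mem_fixedBy] at ht₀
  choose d hd using htrans t₀
  have hfix : ∀ t : fixedBy T γ, d t ∈ fixedBy G γ := fun t => by
    have ht : γ • (t : T) = t := t.2
    have key : (γ • d t) • t₀ = d t • t₀ := by
      have := hcompat γ (d t) t₀
      rw [hd, ht, ht₀] at this
      rw [← this, hd]
    rw [mem_fixedBy, eq_comm, ← inv_mul_eq_one]
    exact hfree _ t₀ (by rw [mul_smul, key, inv_smul_smul])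
  refine Nat.card_le_card_of_injective (fun t => (⟨d t, hfix t⟩ : fixedBy G γ)) fun s t hst => ?_
  have hst' : d s = d t := congrArg Subtype.val hst
  exact Subtype.ext (by rw [← hd s, hst', hd])

/-- Let `G` be a finite group, `T` a finite nonempty principal homogeneous
space for `G` (the action is free and transitive), and `Γ` a group acting on
`G` by group automorphisms and on `T` by permutations, compatibly with the
`G`-action on `T`.  Then the number of `Γ`-orbits on `T` is at most the number
of `Γ`-orbits on `G`. -/
theorem orbit_count_phs_le
    (G T Γ : Type*) [Group G] [Finite G] [Finite T] [Nonempty T]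
    [MulAction G T]
    (hfree : ∀ (g : G) (t : T), g • t = t → g = 1)
    (htrans : ∀ t t' : T, ∃ g : G, g • t = t')
    [Group Γ] [MulDistribMulAction Γ G] [MulAction Γ T]
    (hcompat : ∀ (γ : Γ) (g : G) (t : T), γ • (g • t) = (γ • g) • (γ • t)) :
    Nat.card (MulAction.orbitRel.Quotient Γ T)
      ≤ Nat.card (MulAction.orbitRel.Quotient Γ G) := by
  exact card_orbits_le_of_card_fixedBy_le (card_fixedBy_phs_le hfree htrans hcompat)
end

section
/- Let G be a finite group acting transitively on a finite nonempty set T, and let γ be a pair consisting of a group automorphism of G and a permutation of T satisfying γ(g·t) = γ(g)·γ(t) for all g ∈ G, t ∈ T. Suppose t₀ ∈ T is fixed by γ, and let G₀ be the stabilizer of t₀ in G. Then γ maps G₀ to itself, and |G^γ| ≤ |T^γ| · |G₀^γ| and |T^γ| ≤ |G^γ|, where G^γ, T^γ, G₀^γ denote the fixed points of γ on G, T, G₀ respectively. -/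
/-!
Write `γ = (φ, σ)`. Both inequalities come from bounding the fibres of a map.

* The orbit map `g ↦ g • t₀` sends `G^γ` to `T^γ`, and `a ↦ a₀⁻¹ * a` embeds the fibre through
  `a₀` into `G₀^γ`. Hence `|G^γ| ≤ |T^γ| * |G₀^γ|`.
* A point `g • t₀` is fixed by `γ` iff the Lang map `g ↦ g⁻¹ * φ g` takes a value in `G₀` at `g`.
  By transitivity, the set of such `g` has cardinality `|T^γ| * |G₀|`. The fibres of the Lang map
  are right cosets of `G^γ`, so this set has at most `|G₀| * |G^γ|` elements, and `|G₀|` cancels.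
-/

/-- If every fibre of `f : A → B` embeds into `C`, then `|A| ≤ |B| * |C|`. -/
lemma card_le_mul_of_fiber_embeds {A B C : Type*} [Finite B] [Finite C] (f : A → B)
    (h : ∀ a₀ : A, ∃ e : {a : A // f a = f a₀} → C, Function.Injective e) :
    Nat.card A ≤ Nat.card B * Nat.card C := by
  choose e he using h
  have hr : ∀ a : A, f a = f (Set.rangeSplitting f ⟨f a, a, rfl⟩) := fun a =>
    (Set.apply_rangeSplitting f ⟨f a, a, rfl⟩).symm
  rw [← Nat.card_prod]
  refine Nat.card_le_card_of_injective
    (fun a => (f a, e (Set.rangeSplitting f ⟨f a, a, rfl⟩) ⟨a, hr a⟩)) ?_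
  intro a b hab
  obtain ⟨h1, h2⟩ := Prod.mk.inj hab
  have key : ∀ (x y : B) (hx : x ∈ Set.range f) (hy : y ∈ Set.range f)
      (pa : f a = f (Set.rangeSplitting f ⟨x, hx⟩)) (pb : f b = f (Set.rangeSplitting f ⟨y, hy⟩)),
      x = y → e (Set.rangeSplitting f ⟨x, hx⟩) ⟨a, pa⟩ = e (Set.rangeSplitting f ⟨y, hy⟩) ⟨b, pb⟩ →
      a = b := by
    rintro x y hx hy pa pb rfl hE
    exact congrArg Subtype.val (he _ hE)
  exact key _ _ _ _ _ _ h1 h2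

/-- Let `G` be a finite group acting transitively on a finite nonempty set `T`,
and `γ = (φ, σ)` a pair consisting of a group automorphism `φ` of `G` and a
permutation `σ` of `T` with `σ (g • t) = φ g • σ t`.  Suppose `t₀ ∈ T` is
fixed by `σ` and let `G₀` be the stabilizer of `t₀` in `G`.  Then `γ` maps
`G₀` to itself, and `|G^γ| ≤ |T^γ| · |G₀^γ|` and `|T^γ| ≤ |G^γ|`. -/
theorem fixed_points_transitive_bounds
    (G T : Type*) [Group G] [Finite G] [Finite T] [Nonempty T]
    [MulAction G T]
    (htrans : ∀ t t' : T, ∃ g : G, g • t = t')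
    (φ : G ≃* G) (σ : Equiv.Perm T)
    (hcompat : ∀ (g : G) (t : T), σ (g • t) = φ g • σ t)
    (t₀ : T) (ht₀ : σ t₀ = t₀) :
    (∀ g : G, g • t₀ = t₀ → φ g • t₀ = t₀) ∧
    Nat.card {g : G // φ g = g}
      ≤ Nat.card {t : T // σ t = t} *
          Nat.card {g : G // g • t₀ = t₀ ∧ φ g = g} ∧
    Nat.card {t : T // σ t = t} ≤ Nat.card {g : G // φ g = g} := by
  refine ⟨fun g hg => ?_, ?_, ?_⟩
  · have := hcompat g t₀
    rw [hg, ht₀] at this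
    exact this.symm
  · refine card_le_mul_of_fiber_embeds
      (fun g => ⟨g.1 • t₀, by rw [hcompat, g.2, ht₀]⟩) fun a₀ =>
        ⟨fun a => ⟨a₀.1⁻¹ * a.1.1, ?_, ?_⟩, ?_⟩
    · have h : a.1.1 • t₀ = a₀.1 • t₀ := congrArg Subtype.val a.2
      rw [mul_smul, h, inv_smul_smul]
    · have h₀ := a₀.2
      have h := a.1.2
      simp only [map_mul, map_inv, h₀, h]
    · intro a b hab
      exact Subtype.ext (Subtype.ext (mul_left_cancel (congrArg Subtype.val hab)))
  · choose s hs using htrans t₀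
    have hpos : 0 < Nat.card (MulAction.stabilizer G t₀) := Nat.card_pos
    refine Nat.le_of_mul_le_mul_left ?_ hpos
    rw [mul_comm, ← Nat.card_prod]
    -- The pair `(t, k)` stands for `s t * k`, an element of `G` carrying `t₀` to `t`.
    have hfix : ∀ p : {t : T // σ t = t} × MulAction.stabilizer G t₀,
        (s p.1.1 * p.2.1) • t₀ = p.1.1 := fun p => by
      rw [mul_smul, MulAction.mem_stabilizer_iff.1 p.2.2, hs]
    refine card_le_mul_of_fiber_embeds
      (fun p : {t : T // σ t = t} × MulAction.stabilizer G t₀ =>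
        (⟨(s p.1.1 * p.2.1)⁻¹ * φ (s p.1.1 * p.2.1), ?_⟩ : MulAction.stabilizer G t₀))
      fun a₀ => ⟨fun a => ⟨(s a.1.1.1 * a.1.2.1) * (s a₀.1.1 * a₀.2.1)⁻¹, ?_⟩, ?_⟩
    · have h := hcompat (s p.1.1 * p.2.1) t₀
      rw [hfix, p.1.2, ht₀] at h
      rw [MulAction.mem_stabilizer_iff, mul_smul, ← h, inv_smul_eq_iff, hfix]
    · have h := congrArg Subtype.val a.2
      dsimp only at h
      rw [inv_mul_eq_iff_eq_mul] at h
      rw [map_mul φ (s a.1.1.1 * a.1.2.1), map_inv, h]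
      group
    · intro a b hab
      have h : s a.1.1.1 * a.1.2.1 = s b.1.1.1 * b.1.2.1 :=
        mul_right_cancel (congrArg Subtype.val hab)
      have ht : a.1.1 = b.1.1 := Subtype.ext (by rw [← hfix a.1, ← hfix b.1, h])
      rw [ht] at h
      exact Subtype.ext (Prod.ext ht (Subtype.ext (mul_left_cancel h)))
end

section
/- Let p be a prime and let γ be a p-adic integer with ‖γ‖ = 1 (i.e., γ is a unit of ℤ_p) which is not a root of unity (γ^m ≠ 1 for every positive integer m). Then there is a constant C > 0 such that for all integers n ≥ 2, the p-adic valuation of 1 − γⁿ satisfies v(1 − γⁿ) ≤ C · log n. (Here v : ℤ_p \ {0} → ℤ≥0 is the normalized p-adic valuation with v(p) = 1; note 1 − γⁿ ≠ 0 since γ is not a root of unity.) -/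
/-!
Some power `δ = γ ^ m` with `m > 0` satisfies `δ ≡ 1 mod p ^ 2`. For such `δ`, lifting the exponent
gives `‖1 - δ‖ ≤ ‖1 - δ ^ n‖ * n` (`norm_one_sub_le`): the geometric sum `∑_{i<n} δ ^ i` is congruent
to `n` mod `p ^ 2`, so it is a unit when `p ∤ n` and has norm exactly `1 / p` when `n = p`; working
modulo `p ^ 2` instead of `p` makes the argument uniform in `p`, including `p = 2`. Since
`1 - γ ^ n` divides `1 - γ ^ (m * n) = 1 - δ ^ n`, this yields
`p ^ v(1 - γ ^ n) ≤ p ^ v(1 - δ) * n`, and taking logarithms gives the bound.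
-/

/-- A unit of `ℤ_[p]` has a positive power congruent to `1` mod `p ^ 2`, by Euler's theorem in
`ZMod (p ^ 2)`. -/
lemma exists_pow_modEq_one (p : ℕ) [Fact p.Prime] (γ : ℤ_[p]) (hγ : ‖γ‖ = 1) :
    ∃ m : ℕ, 0 < m ∧ (p : ℤ_[p]) ^ 2 ∣ 1 - γ ^ m := by
  have hp : p.Prime := Fact.out
  obtain ⟨u, rfl⟩ := PadicInt.isUnit_iff.mpr hγ
  refine ⟨Nat.totient (p ^ 2), Nat.totient_pos.mpr (pow_pos hp.pos 2), ?_⟩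
  rw [← Ideal.mem_span_singleton, ← PadicInt.ker_toZModPow, RingHom.mem_ker]
  have h := congrArg Units.val
    (ZMod.pow_totient (Units.map (PadicInt.toZModPow (p := p) 2).toMonoidHom u))
  have h' : (PadicInt.toZModPow 2) (u : ℤ_[p]) ^ Nat.totient (p ^ 2) = 1 := by
    rw [Units.val_pow_eq_pow_val] at h
    exact h
  rw [map_sub, map_pow, map_one, h', sub_self]

lemma dvd_geom_sum_sub {R : Type*} [CommRing R] {d a : R} (h : d ∣ 1 - a) (n : ℕ) :
    d ∣ (∑ i ∈ Finset.range n, a ^ i) - n := by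
  have : (∑ i ∈ Finset.range n, a ^ i) - n = ∑ i ∈ Finset.range n, (a ^ i - 1) := by
    simp
  rw [this]
  refine Finset.dvd_sum fun i _ => ?_
  have h1 : a - 1 ∣ a ^ i - 1 := sub_one_dvd_pow_sub_one a i
  exact (dvd_sub_comm.mp h).trans h1

lemma norm_geom_sum_of_not_dvd (p : ℕ) [Fact p.Prime] {a : ℤ_[p]}
    (h : (p : ℤ_[p]) ^ 2 ∣ 1 - a) {n : ℕ} (hn : ¬ p ∣ n) :
    ‖∑ i ∈ Finset.range n, a ^ i‖ = 1 := by
  have hd := (dvd_pow_self (p : ℤ_[p]) two_ne_zero).trans (dvd_geom_sum_sub h n)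
  by_contra hne
  have hlt := lt_of_le_of_ne (PadicInt.norm_le_one _) hne
  rw [PadicInt.norm_lt_one_iff_dvd] at hlt
  have h2 : (p : ℤ_[p]) ∣ n := by simpa using dvd_sub hlt hd
  rw [← PadicInt.norm_lt_one_iff_dvd, PadicInt.norm_natCast_lt_one_iff] at h2
  exact hn h2

lemma norm_geom_sum_prime (p : ℕ) [Fact p.Prime] {a : ℤ_[p]}
    (h : (p : ℤ_[p]) ^ 2 ∣ 1 - a) :
    ‖∑ i ∈ Finset.range p, a ^ i‖ = (p : ℝ)⁻¹ := by
  obtain ⟨c, hc⟩ := dvd_geom_sum_sub h p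
  -- the sum is `p * (1 + p * c)`, and the second factor is a unit
  have h1 : ∑ i ∈ Finset.range p, a ^ i = p * (1 + p * c) := by linear_combination hc
  have hlt : ‖(p : ℤ_[p]) * c‖ < 1 := (PadicInt.norm_lt_one_iff_dvd _).mpr (dvd_mul_right _ _)
  have h2 : ‖1 + (p : ℤ_[p]) * c‖ = 1 := by
    rw [PadicInt.norm_add_eq_max_of_ne (by rw [norm_one]; exact hlt.ne'), norm_one,
      max_eq_left hlt.le]
  rw [h1, norm_mul, h2, PadicInt.norm_p, mul_one]

/-- A form of lifting the exponent: `v(1 - δ ^ n)` exceeds `v(1 - δ)` by at most the logarithm of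
`n` to base `p`. -/
lemma norm_one_sub_le (p : ℕ) [Fact p.Prime] {δ : ℤ_[p]}
    (h : (p : ℤ_[p]) ^ 2 ∣ 1 - δ) (n : ℕ) (hn : 0 < n) :
    ‖1 - δ‖ ≤ ‖1 - δ ^ n‖ * n := by
  have hp : p.Prime := Fact.out
  have hp0 : (p : ℝ) ≠ 0 := by exact_mod_cast hp.ne_zero
  induction n using Nat.strong_induction_on with
  | _ n ih =>
    by_cases hpn : p ∣ n
    · obtain ⟨k, rfl⟩ := hpn
      have hk : 0 < k := Nat.pos_of_mul_pos_left hn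
      have hklt : k < p * k := by nlinarith [hp.two_le]
      have hdk : (p : ℤ_[p]) ^ 2 ∣ 1 - δ ^ k := h.trans (one_sub_dvd_one_sub_pow δ k)
      have hfac : 1 - δ ^ (p * k) = (1 - δ ^ k) * ∑ i ∈ Finset.range p, (δ ^ k) ^ i := by
        rw [mul_neg_geom_sum, ← pow_mul, mul_comm k p]
      rw [hfac, norm_mul, norm_geom_sum_prime p hdk]
      refine (ih k hklt hk).trans_eq ?_
      push_cast
      field_simp
    · rw [← mul_neg_geom_sum, norm_mul, norm_geom_sum_of_not_dvd p h hpn, mul_one]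
      exact le_mul_of_one_le_right (norm_nonneg _) (by exact_mod_cast hn)

/-- Let `γ` be a `p`-adic integer of norm `1` which is not a root of unity.
Then there is a constant `C > 0` such that for all `n ≥ 2`, the `p`-adic
valuation of `1 - γ ^ n` is at most `C * log n`. -/
theorem padic_valuation_one_sub_pow_le
    (p : ℕ) [Fact p.Prime] (γ : ℤ_[p])
    (hγ : ‖γ‖ = 1) (hroot : ∀ m : ℕ, 0 < m → γ ^ m ≠ 1) :
    ∃ C : ℝ, 0 < C ∧ ∀ n : ℕ, 2 ≤ n →
      ((1 - γ ^ n).valuation : ℝ) ≤ C * Real.log n := by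
  have hp : p.Prime := Fact.out
  have hp0 : (0 : ℝ) < p := by exact_mod_cast hp.pos
  have hlogp : 0 < Real.log p := Real.log_pos (by exact_mod_cast hp.one_lt)
  have hlog2 : 0 < Real.log 2 := Real.log_pos one_lt_two
  obtain ⟨m, hm, hdvd⟩ := exists_pow_modEq_one p γ hγ
  set c : ℕ := (1 - γ ^ m).valuation with hc
  refine ⟨c / Real.log 2 + 1 / Real.log p, by positivity, fun n hn => ?_⟩
  have hn0 : 0 < n := by omega
  have hnR : (0 : ℝ) < n := by exact_mod_cast hn0
  have hne : ∀ k : ℕ, 0 < k → 1 - γ ^ k ≠ 0 := fun k hk =>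
    sub_ne_zero.mpr (hroot k hk).symm
  have h1 : ‖1 - (γ ^ m) ^ n‖ ≤ ‖1 - γ ^ n‖ := by
    rw [← pow_mul, mul_comm, pow_mul]
    obtain ⟨d, hd⟩ := one_sub_dvd_one_sub_pow (γ ^ n) m
    rw [hd, norm_mul]
    exact mul_le_of_le_one_right (norm_nonneg _) (PadicInt.norm_le_one _)
  have h2 : ‖1 - γ ^ m‖ ≤ ‖1 - γ ^ n‖ * n :=
    (norm_one_sub_le p hdvd n hn0).trans (by gcongr)
  have h3 : ∀ k : ℕ, 0 < k →
      Real.log ‖1 - γ ^ k‖ = -((1 - γ ^ k).valuation * Real.log p) := fun k hk => by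
    rw [PadicInt.norm_eq_zpow_neg_valuation (hne k hk), Real.log_zpow]
    push_cast
    ring
  have h4 := Real.log_le_log (norm_pos_iff.mpr (hne m hm)) h2
  rw [Real.log_mul (norm_ne_zero_iff.mpr (hne n hn0)) hnR.ne', h3 m hm, h3 n hn0, ← hc] at h4
  have h5 : Real.log 2 ≤ Real.log n :=
    Real.log_le_log two_pos (by exact_mod_cast hn)
  have h6 : ((1 - γ ^ n).valuation : ℝ) ≤ c + Real.log n / Real.log p := by
    rw [← sub_le_iff_le_add', le_div_iff₀ hlogp]
    linarith
  -- `log n ≥ log 2` absorbs the additive constant `c`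
  have h7 : (c : ℝ) ≤ c / Real.log 2 * Real.log n := by
    rw [div_mul_eq_mul_div, le_div_iff₀ hlog2]
    gcongr
  calc _ ≤ _ := h6
    _ ≤ c / Real.log 2 * Real.log n + Real.log n / Real.log p := by gcongr
    _ = _ := by ring
end

section
/- Let p be a prime and let x ∈ ℚ_p be nonzero with ‖x‖ < p^{−2/(p−1)}. Then ‖1 − exp_p(x)‖ = ‖x‖, where exp_p(x) = Σ_{k≥0} x^k/k! is the p-adic exponential (the sum of the exponential power series, which converges for such x). -/
/-!
Legendre's formula gives `(p - 1) v_p((n + 1)!) ≤ n`, so with `R = p ^ (1 / (p - 1))` the terms of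
the exponential series satisfy `‖x ^ (n + 1) / (n + 1)!‖ ≤ ‖x‖ (‖x‖ R) ^ n`
(`norm_exp_term_le`). The hypothesis on `x` yields `‖x‖ R < 1`, hence the series converges by
comparison with a geometric series, and every term of degree at least two has norm at most
`‖x‖ (‖x‖ R) < ‖x‖`. By the ultrametric inequality the linear term `x` dominates
`exp_p x - 1`.
-/

open scoped BigOperators

/-- The `p`-adic exponential, defined by the usual exponential power series. -/
noncomputable def padicExp (p : ℕ) [Fact p.Prime] (x : ℚ_[p]) : ℚ_[p] :=
  ∑' k : ℕ, x ^ k / (k.factorial : ℚ_[p])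

/-- Legendre's bound on the denominators of the exponential series. -/
lemma norm_factorial_inv_le (p : ℕ) [hp : Fact p.Prime] (n : ℕ) :
    ‖((n + 1).factorial : ℚ_[p])‖⁻¹ ≤ ((p : ℝ) ^ (1 / ((p : ℝ) - 1))) ^ n := by
  have hp1 : (1 : ℝ) < p := by exact_mod_cast hp.out.one_lt
  have hp0 : (0 : ℝ) < (p : ℝ) - 1 := by linarith
  have hne : ((n + 1).factorial : ℚ_[p]) ≠ 0 := by
    exact_mod_cast Nat.factorial_ne_zero (n + 1)
  have hv : (p - 1) * padicValNat p (n + 1).factorial ≤ n :=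
    Nat.lt_succ_iff.mp (sub_one_mul_padicValNat_factorial_lt_of_ne_zero p n.succ_ne_zero)
  have hv' : ((p : ℝ) - 1) * (padicValNat p (n + 1).factorial : ℝ) ≤ n := by
    have h : (((p - 1) * padicValNat p (n + 1).factorial : ℕ) : ℝ) ≤ n := by exact_mod_cast hv
    rwa [Nat.cast_mul, Nat.cast_sub hp.out.one_le, Nat.cast_one] at h
  rw [Padic.norm_eq_zpow_neg_valuation hne, Padic.valuation_natCast, zpow_neg, inv_inv,
    zpow_natCast, ← Real.rpow_natCast, ← Real.rpow_natCast, ← Real.rpow_mul (by linarith)]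
  apply Real.rpow_le_rpow_of_exponent_le hp1.le
  rw [one_div_mul_eq_div, le_div_iff₀ hp0]
  linarith

lemma norm_exp_term_le (p : ℕ) [Fact p.Prime] (x : ℚ_[p]) (n : ℕ) :
    ‖x ^ (n + 1) / ((n + 1).factorial : ℚ_[p])‖ ≤
      ‖x‖ * (‖x‖ * (p : ℝ) ^ (1 / ((p : ℝ) - 1))) ^ n := by
  rw [norm_div, norm_pow, div_eq_mul_inv, mul_pow, pow_succ', mul_assoc]
  gcongr
  exact norm_factorial_inv_le p n

/-- If `x ∈ ℚ_p` is nonzero with `‖x‖ < p ^ (-2/(p-1))`, then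
`‖1 - exp_p x‖ = ‖x‖`. -/
theorem padic_norm_one_sub_exp
    (p : ℕ) [Fact p.Prime] (x : ℚ_[p]) (hx : x ≠ 0)
    (hnorm : ‖x‖ < (p : ℝ) ^ (-(2 / ((p : ℝ) - 1)))) :
    ‖1 - padicExp p x‖ = ‖x‖ := by
  have hp1 : (1 : ℝ) < p := by exact_mod_cast (Fact.out : p.Prime).one_lt
  have hp0 : (0 : ℝ) < (p : ℝ) - 1 := by linarith
  have hx0 : 0 < ‖x‖ := norm_pos_iff.mpr hx
  have hterm := norm_exp_term_le p x
  have hq1 : ‖x‖ * (p : ℝ) ^ (1 / ((p : ℝ) - 1)) < 1 := by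
    have hR : 0 < (p : ℝ) ^ (1 / ((p : ℝ) - 1)) := by positivity
    refine (mul_lt_mul_of_pos_right hnorm hR).trans_le ?_
    rw [← Real.rpow_add (by linarith)]
    apply Real.rpow_le_one_of_one_le_of_nonpos hp1.le
    rw [← neg_div, ← add_div]
    exact div_nonpos_of_nonpos_of_nonneg (by norm_num) hp0.le
  have hq0 : 0 ≤ ‖x‖ * (p : ℝ) ^ (1 / ((p : ℝ) - 1)) := by positivity
  generalize ‖x‖ * (p : ℝ) ^ (1 / ((p : ℝ) - 1)) = q at hterm hq1 hq0
  have hs1 : Summable fun n : ℕ => x ^ (n + 1) / ((n + 1).factorial : ℚ_[p]) :=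
    Summable.of_norm_bounded ((summable_geometric_of_lt_one hq0 hq1).mul_left ‖x‖) hterm
  have hs : Summable fun n : ℕ => x ^ n / (n.factorial : ℚ_[p]) :=
    (summable_nat_add_iff 1).mp hs1
  have hexp : padicExp p x =
      1 + (x + ∑' n : ℕ, x ^ (n + 2) / ((n + 2).factorial : ℚ_[p])) := by
    rw [padicExp, hs.tsum_eq_zero_add, hs1.tsum_eq_zero_add]
    simp
  have htail : ‖∑' n : ℕ, x ^ (n + 2) / ((n + 2).factorial : ℚ_[p])‖ < ‖x‖ := by
    refine lt_of_le_of_lt (b := ‖x‖ * q) ?_ (mul_lt_of_lt_one_right hx0 hq1)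
    refine IsUltrametricDist.norm_tsum_le_of_forall_le fun n => (hterm (n + 1)).trans ?_
    gcongr
    exact pow_le_of_le_one hq0 hq1.le n.succ_ne_zero
  rw [hexp, sub_add_cancel_left, norm_neg,
    IsUltrametricDist.norm_add_eq_max_of_norm_ne_norm htail.ne', max_eq_left htail.le]
end

section
/- Let C > 0 and let φ : ℕ → ℕ be a function; define ψ(d) = Σ_{e ∣ d} φ(e). Suppose ψ(d) ≥ d for all d ≥ 1 and that ψ is nondecreasing on positive integers. Suppose that for each positive integer d we are given a finite set G_d of cardinality ψ(d) with an action of a group Γ_d, together with a Γ_d-stable partition G_d = ⋃_{e ∣ d} G'_{d,e} indexed by the divisors e of d, with |G'_{d,e}| = φ(e), such that every Γ_d-orbit contained in G'_{d,e} has cardinality at least C · log ψ(e). Then there is a constant C₁ > 0 such that for all d > 1, the number of Γ_d-orbits on G_d is at most C₁ · ψ(d) / log ψ(d). -/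
open scoped BigOperators

/-!
The number of orbits on a finite set is `∑ x, 1 / |orbit x|`.  Put `N = ψ d` and `r = N ^ (1/3)`.
Points lying in a part `e` with `ψ e > r` have orbits of size at least
`C * log r = (C / 3) * log N`, so together they contribute at most `3 * N / (C * log N)`.
For the other points, `e ≤ ψ e ≤ r` leaves at most `r` possible values of `e`, and each such part
has `φ e ≤ ψ e ≤ r` points; they contribute at most `r ^ 2`, which is at most `3 * N / log N`
because `log N = 3 * log r ≤ 3 * r`.  Hence `C₁ = 3 + 3 / C` works.
The pointwise splitting is done in the main proof; `card_orbits_eq_sum` is the orbit-counting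
identity and `card_small_le` the estimate for the points in small parts.
-/

/-- The number of orbits, counted as the total weight when each point has weight `1 / |orbit|`. -/
lemma card_orbits_eq_sum (Γ X : Type*) [Group Γ] [MulAction Γ X] [Fintype X] :
    (Nat.card (MulAction.orbitRel.Quotient Γ X) : ℝ)
      = ∑ x : X, 1 / (Nat.card (MulAction.orbit Γ x) : ℝ) := by
  classical
  have : Fintype (MulAction.orbitRel.Quotient Γ X) := Fintype.ofFinite _
  rw [← Finset.sum_fiberwise (s := Finset.univ)
    (g := fun x : X => (Quotient.mk'' x : MulAction.orbitRel.Quotient Γ X))]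
  have key : ∀ ω : MulAction.orbitRel.Quotient Γ X,
      ∑ x : X with (Quotient.mk'' x : MulAction.orbitRel.Quotient Γ X) = ω,
        1 / (Nat.card (MulAction.orbit Γ x) : ℝ) = 1 := by
    intro ω
    induction ω using Quotient.inductionOn' with
    | h y =>
      have hmem : ∀ x : X, (Quotient.mk'' x : MulAction.orbitRel.Quotient Γ X) = Quotient.mk'' y
          ↔ x ∈ MulAction.orbit Γ y := fun x => by
        rw [Quotient.eq'', MulAction.orbitRel_apply]
      have hcard : (Finset.univ.filter fun x : X =>
          (Quotient.mk'' x : MulAction.orbitRel.Quotient Γ X) = Quotient.mk'' y).card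
          = Nat.card (MulAction.orbit Γ y) := by
        rw [Nat.card_eq_fintype_card, Fintype.card_subtype]
        congr 1
        ext x
        simp [hmem]
      have hpos : (Nat.card (MulAction.orbit Γ y) : ℝ) ≠ 0 := by
        have : Nonempty (MulAction.orbit Γ y) := ⟨⟨y, MulAction.mem_orbit_self y⟩⟩
        exact_mod_cast Nat.card_pos.ne'
      have hconst : ∀ x ∈ Finset.univ.filter (fun x : X =>
          (Quotient.mk'' x : MulAction.orbitRel.Quotient Γ X) = Quotient.mk'' y),
          1 / (Nat.card (MulAction.orbit Γ x) : ℝ)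
            = 1 / (Nat.card (MulAction.orbit Γ y) : ℝ) := by
        intro x hx
        rw [MulAction.orbit_eq_iff.2 ((hmem x).1 (Finset.mem_filter.1 hx).2)]
      rw [Finset.sum_congr rfl hconst, Finset.sum_const, hcard, nsmul_eq_mul]
      field_simp
  rw [Finset.sum_congr rfl fun ω _ => key ω]
  simp

/-- If every label `e` satisfies `1 ≤ e ≤ ψ e` and its part has at most `ψ e` points, then at most
`k ^ 2` points lie in parts with `ψ e ≤ k`: there are at most `k` such labels. -/
lemma card_small_le {X : Type*} [Fintype X] (P : X → ℕ) (ψ : ℕ → ℕ) (k : ℕ)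
    (hpos : ∀ x, 1 ≤ P x) (hge : ∀ x, P x ≤ ψ (P x))
    (hcard : ∀ x, Nat.card {y : X // P y = P x} ≤ ψ (P x)) :
    (Finset.univ.filter fun x : X => ψ (P x) ≤ k).card ≤ k * k := by
  classical
  refine (Finset.card_le_mul_card_image (f := P) _ k ?_).trans (Nat.mul_le_mul_left k ?_)
  · intro e he
    obtain ⟨x, hx, rfl⟩ := Finset.mem_image.1 he
    refine le_trans ?_ ((hcard x).trans (Finset.mem_filter.1 hx).2)
    rw [Nat.card_eq_fintype_card, Fintype.card_subtype]
    exact Finset.card_le_card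
      (Finset.filter_subset_filter _ (Finset.filter_subset _ _))
  · have hsub : (Finset.univ.filter fun x : X => ψ (P x) ≤ k).image P ⊆ Finset.Icc 1 k := by
      intro e he
      obtain ⟨x, hx, rfl⟩ := Finset.mem_image.1 he
      exact Finset.mem_Icc.2 ⟨hpos x, (hge x).trans (Finset.mem_filter.1 hx).2⟩
    simpa using Finset.card_le_card hsub

/-- Orbit-counting bound: let `C > 0`, `φ : ℕ → ℕ`, and `ψ d = ∑_{e ∣ d} φ e`.
Suppose `ψ d ≥ d` for all `d ≥ 1` and `ψ` is nondecreasing on positive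
integers.  Suppose for each `d ≥ 1` a finite set `G d` of cardinality `ψ d`
carries an action of a group `Γ d` together with a `Γ d`-stable partition into
parts indexed by the divisors `e` of `d` (encoded by `P d : G d → ℕ`), the
part indexed by `e` having cardinality `φ e`, such that every orbit contained
in the part indexed by `e` has cardinality at least `C * log (ψ e)`.  Then
there is `C₁ > 0` such that for all `d > 1` the number of `Γ d`-orbits on
`G d` is at most `C₁ * ψ d / log (ψ d)`. -/
theorem orbit_bound
    (C : ℝ) (hC : 0 < C) (φ ψ : ℕ → ℕ)
    (hψ : ∀ d : ℕ, ψ d = ∑ e ∈ d.divisors, φ e)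
    (hψge : ∀ d : ℕ, 1 ≤ d → d ≤ ψ d)
    (hψmono : ∀ d d' : ℕ, 1 ≤ d → d ≤ d' → ψ d ≤ ψ d')
    (G : ℕ → Type*) [∀ d, Fintype (G d)]
    (Γ : ℕ → Type*) [∀ d, Group (Γ d)] [∀ d, MulAction (Γ d) (G d)]
    (hGcard : ∀ d : ℕ, 1 ≤ d → Nat.card (G d) = ψ d)
    (P : ∀ d : ℕ, G d → ℕ)
    (hPdvd : ∀ d : ℕ, 1 ≤ d → ∀ x : G d, P d x ∣ d)
    (hPstable : ∀ (d : ℕ) (γ : Γ d) (x : G d), P d (γ • x) = P d x)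
    (hPcard : ∀ d e : ℕ, 1 ≤ d → e ∣ d →
      Nat.card {x : G d // P d x = e} = φ e)
    (horbit : ∀ d : ℕ, 1 ≤ d → ∀ x : G d,
      C * Real.log (ψ (P d x)) ≤ (Nat.card (MulAction.orbit (Γ d) x) : ℝ)) :
    ∃ C₁ : ℝ, 0 < C₁ ∧ ∀ d : ℕ, 1 < d →
      (Nat.card (MulAction.orbitRel.Quotient (Γ d) (G d)) : ℝ)
        ≤ C₁ * (ψ d) / Real.log (ψ d) := by
  refine ⟨3 + 3 / C, by positivity, fun d hd => ?_⟩
  have hd1 : 1 ≤ d := hd.le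
  have hN : (2 : ℝ) ≤ ψ d := by exact_mod_cast hd.trans_le (hψge d hd1)
  have hlog : 0 < Real.log (ψ d) := Real.log_pos (by linarith)
  obtain ⟨r, hr, hr3⟩ : ∃ r : ℝ, 0 < r ∧ r ^ 3 = ψ d :=
    ⟨(ψ d : ℝ) ^ ((3 : ℕ) : ℝ)⁻¹, by positivity,
      Real.rpow_inv_natCast_pow (by positivity) (by norm_num)⟩
  have hlogr : Real.log (ψ d) = 3 * Real.log r := by
    rw [← hr3, Real.log_pow]; norm_num
  have hlogle : Real.log (ψ d) ≤ 3 * r := by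
    have := Real.log_le_sub_one_of_pos hr
    linarith
  have hPpos : ∀ x : G d, 1 ≤ P d x := fun x => Nat.pos_of_dvd_of_pos (hPdvd d hd1 x) hd1
  have hsmall := card_small_le (P d) ψ ⌊r⌋₊ hPpos (fun x => hψge _ (hPpos x)) (fun x => by
    rw [hPcard d _ hd1 (hPdvd d hd1 x), hψ (P d x)]
    exact Finset.single_le_sum (f := φ) (fun _ _ => Nat.zero_le _)
      (Nat.mem_divisors_self _ (Nat.pos_iff_ne_zero.1 (hPpos x))))
  have hfloor : (⌊r⌋₊ : ℝ) ≤ r := Nat.floor_le hr.le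
  have hpt : ∀ x : G d, 1 / (Nat.card (MulAction.orbit (Γ d) x) : ℝ)
      ≤ (if ψ (P d x) ≤ ⌊r⌋₊ then 1 else 0) + 3 / (C * Real.log (ψ d)) := by
    intro x
    have : Nonempty (MulAction.orbit (Γ d) x) := ⟨⟨x, MulAction.mem_orbit_self x⟩⟩
    have horb : (1 : ℝ) ≤ Nat.card (MulAction.orbit (Γ d) x) := by
      exact_mod_cast Nat.card_pos (α := MulAction.orbit (Γ d) x)
    split_ifs with h
    · have h1 : 1 / (Nat.card (MulAction.orbit (Γ d) x) : ℝ) ≤ 1 := by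
        rw [div_le_one (by linarith)]; exact horb
      have h2 : 0 ≤ 3 / (C * Real.log (ψ d)) := by positivity
      linarith
    · have hrlt : r < ψ (P d x) := (Nat.floor_lt hr.le).1 (not_le.1 h)
      have h1 : Real.log r ≤ Real.log (ψ (P d x)) := Real.log_le_log hr hrlt.le
      have h2 := horbit d hd1 x
      have h3 : C * Real.log r ≤ C * Real.log (ψ (P d x)) :=
        mul_le_mul_of_nonneg_left h1 hC.le
      rw [zero_add, div_le_div_iff₀ (by linarith) (by positivity), hlogr]
      linarith
  have hcardG : (Fintype.card (G d) : ℝ) = ψ d := by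
    rw [← hGcard d hd1, Nat.card_eq_fintype_card]
  calc (Nat.card (MulAction.orbitRel.Quotient (Γ d) (G d)) : ℝ)
      = ∑ x : G d, 1 / (Nat.card (MulAction.orbit (Γ d) x) : ℝ) := card_orbits_eq_sum _ _
    _ ≤ ∑ x : G d, ((if ψ (P d x) ≤ ⌊r⌋₊ then 1 else 0) + 3 / (C * Real.log (ψ d))) :=
        Finset.sum_le_sum fun x _ => hpt x
    _ = ((Finset.univ.filter fun x : G d => ψ (P d x) ≤ ⌊r⌋₊).card : ℝ)
          + ψ d * (3 / (C * Real.log (ψ d))) := by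
        rw [Finset.sum_add_distrib, Finset.sum_boole, Finset.sum_const, nsmul_eq_mul,
          Finset.card_univ, hcardG]
    _ ≤ r * r + ψ d * (3 / (C * Real.log (ψ d))) := by
        have h1 : ((Finset.univ.filter fun x : G d => ψ (P d x) ≤ ⌊r⌋₊).card : ℝ)
            ≤ ⌊r⌋₊ * ⌊r⌋₊ := by exact_mod_cast hsmall
        have h2 : (⌊r⌋₊ : ℝ) * ⌊r⌋₊ ≤ r * r := by gcongr
        linarith
    _ ≤ 3 * ψ d / Real.log (ψ d) + ψ d * (3 / (C * Real.log (ψ d))) := by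
        gcongr
        rw [le_div_iff₀ hlog]
        calc r * r * Real.log (ψ d) ≤ r * r * (3 * r) := by gcongr
          _ = 3 * ψ d := by rw [← hr3]; ring
    _ = (3 + 3 / C) * ψ d / Real.log (ψ d) := by
        field_simp
end

section
/- Fix an integer q ≥ 2. There is a constant C > 0 such that for every integer d > 1 coprime to q, the number of orbits of the permutation x ↦ q·x of ℤ/dℤ (equivalently, of the action on ℤ/dℤ of the cyclic group generated by multiplication by q) is at most C · d / log d. -/
/-!
Fix a threshold `m ≥ 1`. Orbits are split according to whether their points return to themselves in
fewer than `m` steps.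

* A point `x` with `q ^ j * x = x` is killed by `q ^ j - 1`; as `ℤ/dℤ` is cyclic, there are at most
  `q ^ j - 1` such points. Summing over `0 < j < m`, at most `q ^ m` points, hence at most `q ^ m`
  orbits, return early (`card_early_return_le`).
* Every other orbit has at least `m` points, so there are at most `d / m` of them.

Thus there are at most `q ^ m + d / m` orbits (`card_orbits_le`). With
`m = ⌊log d / (2 log q)⌋ + 1` the first term is at most `q √d ≤ 2 q d / log d`, and the second at
most `2 log q * d / log d`.
-/

open Finset Classical in
theorem card_early_return_le (q : ℕ) (hq : 2 ≤ q) (d : ℕ) [NeZero d] (m : ℕ) :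
    #{x : ZMod d | ∃ j ∈ Ico 1 m, (q : ZMod d) ^ j * x = x} ≤ q ^ m := by
  have hsub : ({x : ZMod d | ∃ j ∈ Ico 1 m, (q : ZMod d) ^ j * x = x} : Finset (ZMod d)) ⊆
      (Ico 1 m).biUnion fun j => {x : ZMod d | (q ^ j - 1) • x = 0} := by
    intro x hx
    simp only [mem_filter, mem_univ, true_and, mem_biUnion] at hx ⊢
    obtain ⟨j, hj, h⟩ := hx
    refine ⟨j, hj, ?_⟩
    rw [nsmul_eq_mul, Nat.cast_sub (Nat.one_le_pow _ _ (by omega))]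
    push_cast
    rw [sub_mul, h, one_mul, sub_self]
  calc _ ≤ _ := card_le_card hsub
    _ ≤ ∑ j ∈ Ico 1 m, #{x : ZMod d | (q ^ j - 1) • x = 0} := card_biUnion_le
    _ ≤ ∑ j ∈ Ico 1 m, q ^ j := by
        refine sum_le_sum fun j hj => ?_
        have h1 : 1 < q ^ j := Nat.one_lt_pow (by simp at hj; omega) (by omega)
        exact (IsAddCyclic.card_nsmul_eq_zero_le (by omega)).trans (Nat.sub_le _ _)
    _ ≤ q ^ m := (Nat.geomSum_lt hq fun k hk => (mem_Ico.1 hk).2).le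

open Finset in
theorem card_orbits_le (q : ℕ) (hq : 2 ≤ q) (d : ℕ) [NeZero d]
    (π : Equiv.Perm (ZMod d)) (hπ : ∀ x : ZMod d, π x = (q : ZMod d) * x)
    (m : ℕ) (hm : 0 < m) :
    (Nat.card (MulAction.orbitRel.Quotient (Subgroup.zpowers π) (ZMod d)) : ℝ)
      ≤ (q : ℝ) ^ m + d / m := by
  classical
  have hpow : ∀ (i : ℕ) (x : ZMod d), (π ^ i) x = (q : ZMod d) ^ i * x := by
    intro i x
    induction i with
    | zero => simp
    | succ i ih => rw [pow_succ', Equiv.Perm.mul_apply, ih, hπ, pow_succ']; ring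
  let Ω := MulAction.orbitRel.Quotient (Subgroup.zpowers π) (ZMod d)
  let f : ZMod d → Ω := Quotient.mk''
  have hsurj : Function.Surjective f := Quotient.mk''_surjective
  have : Finite Ω := Finite.of_surjective f hsurj
  have := Fintype.ofFinite Ω
  have hf : ∀ (i : ℕ) (x : ZMod d), f ((π ^ i) x) = f x := fun i x =>
    Quotient.sound' (MulAction.orbitRel_apply.2
      ⟨⟨π ^ i, Subgroup.npow_mem_zpowers π i⟩, rfl⟩)
  let S : Finset (ZMod d) := {x : ZMod d | ∃ j ∈ Ico 1 m, (q : ZMod d) ^ j * x = x}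
  have hS : #(S.image f) ≤ q ^ m := card_image_le.trans (card_early_return_le q hq d m)
  -- An orbit avoiding `S` contains the `m` distinct points `x, π x, …, π ^ (m - 1) x`.
  have hfib : ∀ ω ∈ (S.image f)ᶜ, m ≤ #{x : ZMod d | f x = ω} := by
    intro ω hω
    obtain ⟨x, rfl⟩ := hsurj ω
    have hx : x ∉ S := fun h => (mem_compl.1 hω) (mem_image_of_mem f h)
    have key : ∀ i j : ℕ, i < j → j < m → (π ^ i) x ≠ (π ^ j) x := by
      intro i j hij hj h
      apply hx
      simp only [S, mem_filter, mem_univ, true_and]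
      refine ⟨j - i, mem_Ico.2 ⟨by omega, by omega⟩, ?_⟩
      rw [← hpow]
      apply (π ^ i).injective
      rw [← Equiv.Perm.mul_apply, ← pow_add, h]
      congr 2
      omega
    have hinj : Set.InjOn (fun i : ℕ => (π ^ i) x) (range m : Finset ℕ) := by
      intro i hi j hj h
      simp only [coe_range, Set.mem_Iio] at hi hj
      rcases lt_trichotomy i j with hij | hij | hij
      · exact absurd h (key i j hij hj)
      · exact hij
      · exact absurd h.symm (key j i hij hi)
    calc m = #(range m) := (card_range m).symm
      _ ≤ _ := card_le_card_of_injOn (fun i : ℕ => (π ^ i) x)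
        (fun i _ => by simpa using hf i x) hinj
  have hB : #(S.image f)ᶜ * m ≤ d := by
    calc #(S.image f)ᶜ * m ≤ ∑ ω ∈ (S.image f)ᶜ, #{x : ZMod d | f x = ω} := by
          simpa using card_nsmul_le_sum _ _ m hfib
      _ ≤ ∑ ω : Ω, #{x : ZMod d | f x = ω} := sum_le_sum_of_subset (subset_univ _)
      _ = #(univ : Finset (ZMod d)) :=
          (card_eq_sum_card_fiberwise (fun x _ => mem_coe.2 (mem_univ (f x)))).symm
      _ = d := by rw [card_univ, ZMod.card]
  have hcard : Nat.card Ω = #(S.image f) + #(S.image f)ᶜ := by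
    rw [Nat.card_eq_fintype_card, card_add_card_compl]
  change (Nat.card Ω : ℝ) ≤ _
  rw [hcard, Nat.cast_add]
  refine add_le_add (by exact_mod_cast hS) ?_
  rw [le_div_iff₀ (by exact_mod_cast hm)]
  exact_mod_cast hB

/-- Fix `q ≥ 2`.  There is a constant `C > 0` such that for all `d > 1`
coprime to `q`, the number of orbits of the permutation `x ↦ q • x` of
`ℤ/dℤ` (i.e. of the cyclic group it generates acting on `ℤ/dℤ`) is at most
`C * d / log d`. -/
theorem mul_q_orbit_count_le
    (q : ℕ) (hq : 2 ≤ q) :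
    ∃ C : ℝ, 0 < C ∧ ∀ d : ℕ, 1 < d → Nat.Coprime q d →
      ∀ π : Equiv.Perm (ZMod d), (∀ x : ZMod d, π x = (q : ZMod d) * x) →
        (Nat.card (MulAction.orbitRel.Quotient (Subgroup.zpowers π) (ZMod d)) : ℝ)
          ≤ C * d / Real.log d := by
  have hq1 : (1 : ℝ) < q := by exact_mod_cast hq
  have hq0 : (0 : ℝ) < q := by linarith
  have hlq : 0 < Real.log q := Real.log_pos hq1
  refine ⟨2 * q + 2 * Real.log q, by positivity, ?_⟩
  intro d hd _ π hπ
  have : NeZero d := ⟨by omega⟩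
  have hd1 : (1 : ℝ) < d := by exact_mod_cast hd
  have hd0 : (0 : ℝ) < d := by linarith
  have hld : 0 < Real.log d := Real.log_pos hd1
  set t : ℝ := Real.log d / (2 * Real.log q) with ht
  have ht0 : 0 < t := by positivity
  have hsq : √(d : ℝ) * √(d : ℝ) = d := Real.mul_self_sqrt hd0.le
  have hs0 : 0 < √(d : ℝ) := Real.sqrt_pos.2 hd0
  have hlogs : Real.log d ≤ 2 * √(d : ℝ) := by
    have h1 := Real.log_sqrt hd0.le
    have h2 := Real.log_le_sub_one_of_pos hs0
    linarith
  refine (card_orbits_le q hq d π hπ (⌊t⌋₊ + 1) (Nat.succ_pos _)).trans ?_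
  have hfirst : (q : ℝ) ^ (⌊t⌋₊ + 1) ≤ 2 * q * d / Real.log d := by
    have hqt : (q : ℝ) ^ ⌊t⌋₊ ≤ √(d : ℝ) := by
      rw [← Real.log_le_log_iff (by positivity) hs0, Real.log_pow, Real.log_sqrt hd0.le]
      calc (⌊t⌋₊ : ℝ) * Real.log q ≤ t * Real.log q := by
            gcongr
            exact Nat.floor_le ht0.le
        _ = Real.log d / 2 := by rw [ht]; field_simp
    rw [pow_succ, le_div_iff₀ hld]
    calc (q : ℝ) ^ ⌊t⌋₊ * q * Real.log d ≤ √(d : ℝ) * q * (2 * √(d : ℝ)) := by gcongr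
      _ = 2 * q * (√(d : ℝ) * √(d : ℝ)) := by ring
      _ = 2 * q * d := by rw [hsq]
  have hsecond : (d : ℝ) / (⌊t⌋₊ + 1 : ℕ) ≤ 2 * Real.log q * d / Real.log d := by
    calc (d : ℝ) / (⌊t⌋₊ + 1 : ℕ) ≤ d / t := by
          gcongr
          push_cast
          exact (Nat.lt_floor_add_one t).le
      _ = 2 * Real.log q * d / Real.log d := by rw [ht]; field_simp
  calc _ ≤ 2 * q * d / Real.log d + 2 * Real.log q * d / Real.log d := add_le_add hfirst hsecond
    _ = _ := by ring
end

section
/- Let p be a prime, let k be a finite field of characteristic p, let m and n be positive integers, let W(k) be the ring of p-typical Witt vectors of k with Frobenius endomorphism σ, and let γ be a unit of W(k). Then any set S of solutions α ∈ W(k) of the equation σ^m(α) = γ·α whose elements are pairwise incongruent modulo p^n (i.e., α − α' ∉ p^n·W(k) for distinct α, α' ∈ S) has cardinality at most p^{n·m}. In particular this bound is independent of the cardinality of k. -/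
/-!
Solutions of `σ^m(α) = γ α` form an additive group, and the bound follows by induction on `n`.
The residue in `k` of a solution is a root of `X^(p^m) - c X`, where `c` is the residue of `γ`,
so at most `p^m` residues occur. Two solutions with the same residue differ by `p β`, and since
`W(k)` is a domain in which `σ` fixes `p`, the quotient `β` is again a solution; incongruence
modulo `p^(n+1)` of the original solutions becomes incongruence modulo `p^n` of the quotients.
Hence each residue class contains at most `p^(n m)` elements, and `p^m * p^(n m) = p^((n+1) m)`.
-/

open Polynomial in
/-- The elements of `T` are roots of `X^q - c X`, which has degree `q` for every `c` because
`1 < q`. -/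
theorem card_le_of_pow_eq_mul {k : Type*} [Field k] {q : ℕ} (hq : 1 < q) (c : k)
    (T : Finset k) (hT : ∀ x ∈ T, x ^ q = c * x) : T.card ≤ q := by
  have hdeg : (X ^ q - C c * X : k[X]).natDegree = q := by
    rw [natDegree_sub_eq_left_of_natDegree_lt, natDegree_X_pow]
    rw [natDegree_X_pow]
    exact (natDegree_C_mul_le c X).trans_lt (by simpa using hq)
  have hne : (X ^ q - C c * X : k[X]) ≠ 0 := by
    intro h
    rw [h, natDegree_zero] at hdeg
    omega
  rw [← hdeg]
  refine card_le_degree_of_subset_roots (Z := T) fun x hx => ?_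
  rw [mem_roots hne]
  simp [hT x hx]

theorem WittVector.p_dvd_of_coeff_zero_eq_zero {p : ℕ} [Fact p.Prime] {k : Type*} [Field k]
    [CharP k p] [PerfectRing k p] (x : WittVector p k) (hx : x.coeff 0 = 0) :
    (p : WittVector p k) ∣ x := by
  by_cases h0 : x = 0
  · simp [h0]
  obtain ⟨r, b, hb, hxb⟩ := WittVector.exists_eq_pow_p_mul x h0
  cases r with
  | zero => simp [hxb] at hx; exact absurd hx hb
  | succ r => exact ⟨p ^ r * b, by rw [hxb]; ring⟩

/-- Induction step for a single residue class: dividing differences by `p` turns solutions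
pairwise incongruent modulo `p^(n+1)` into as many solutions pairwise incongruent modulo `p^n`. -/
theorem exists_divided_solutions {p : ℕ} [Fact p.Prime] {k : Type*} [Field k]
    [CharP k p] [PerfectRing k p] {m n : ℕ} {γ : WittVector p k}
    (S : Finset (WittVector p k))
    (hsol : ∀ α ∈ S,
      (⇑(WittVector.frobenius : WittVector p k →+* WittVector p k))^[m] α = γ * α)
    (hincong : ∀ α ∈ S, ∀ α' ∈ S, α ≠ α' → ¬ ((p : WittVector p k) ^ (n + 1) ∣ α - α'))
    (hres : ∀ α ∈ S, ∀ α' ∈ S, α.coeff 0 = α'.coeff 0) :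
    ∃ T : Finset (WittVector p k), T.card = S.card ∧
      (∀ α ∈ T,
        (⇑(WittVector.frobenius : WittVector p k →+* WittVector p k))^[m] α = γ * α) ∧
      ∀ α ∈ T, ∀ α' ∈ T, α ≠ α' → ¬ ((p : WittVector p k) ^ n ∣ α - α') := by
  classical
  rcases S.eq_empty_or_nonempty with rfl | ⟨α₀, h₀⟩
  · exact ⟨∅, by simp⟩
  have hdiv : ∀ α : S, ∃ β : WittVector p k, α.1 - α₀ = p * β := fun α => by
    refine WittVector.p_dvd_of_coeff_zero_eq_zero _ ?_
    change WittVector.constantCoeff (α.1 - α₀) = 0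
    rw [map_sub, sub_eq_zero]
    exact hres _ α.2 _ h₀
  choose f hf using hdiv
  have hsub : ∀ a b : S, a.1 - b.1 = p * (f a - f b) := fun a b => by
    rw [mul_sub, ← hf, ← hf]; ring
  have hinj : Function.Injective f := fun a b hab => by
    have := hsub a b
    rw [hab, sub_self, mul_zero, sub_eq_zero] at this
    exact Subtype.ext this
  refine ⟨S.attach.image f, ?_, ?_, ?_⟩
  · rw [Finset.card_image_of_injective _ hinj, Finset.card_attach]
  · intro β hβ
    obtain ⟨a, -, rfl⟩ := Finset.mem_image.1 hβ
    apply mul_left_cancel₀ (WittVector.p_nonzero p k)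
    have h1 := congrArg (⇑(WittVector.frobenius : WittVector p k →+* WittVector p k))^[m] (hf a)
    rw [iterate_map_sub, iterate_map_mul, hsol _ a.2, hsol _ h₀, ← mul_sub, hf a] at h1
    rw [← RingHom.coe_pow, map_natCast] at h1
    rw [← RingHom.coe_pow, ← h1]
    ring
  · intro β hβ β' hβ' hne hdvd
    obtain ⟨a, -, rfl⟩ := Finset.mem_image.1 hβ
    obtain ⟨b, -, rfl⟩ := Finset.mem_image.1 hβ'
    refine hincong _ a.2 _ b.2 (fun h => hne (congrArg f (Subtype.ext h))) ?_
    rw [hsub, pow_succ']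
    exact mul_dvd_mul_left _ hdvd


/-- Let `k` be a finite field of characteristic `p`, `W(k)` its ring of
`p`-typical Witt vectors with Frobenius `σ`, and `γ` a unit of `W(k)`.  Then
any set of solutions `α ∈ W(k)` of `σ^m(α) = γ * α` which are pairwise
incongruent modulo `p^n` has cardinality at most `p^(n*m)` (in particular the
bound is independent of the cardinality of `k`). -/
theorem witt_frobenius_eqn_solutions_card_le
    (p : ℕ) [Fact p.Prime] (k : Type*) [Field k] [Fintype k] [CharP k p]
    (m n : ℕ) (hm : 0 < m) (hn : 0 < n)
    (γ : (WittVector p k)ˣ)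
    (S : Finset (WittVector p k))
    (hsol : ∀ α ∈ S,
      (⇑(WittVector.frobenius : WittVector p k →+* WittVector p k))^[m] α
        = (γ : WittVector p k) * α)
    (hincong : ∀ α ∈ S, ∀ α' ∈ S, α ≠ α' →
      ¬ ((p : WittVector p k) ^ n ∣ α - α')) :
    S.card ≤ p ^ (n * m) := by
  classical
  clear hn
  induction n generalizing S with
  | zero =>
    rw [zero_mul, pow_zero, Finset.card_le_one]
    intro a ha b hb
    by_contra hab
    exact hincong a ha b hb hab (by simp)
  | succ n ih =>
    have himage : (S.image fun α => α.coeff 0).card ≤ p ^ m := by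
      refine card_le_of_pow_eq_mul (Nat.one_lt_pow hm.ne' (Fact.out : p.Prime).one_lt)
        ((γ : WittVector p k).coeff 0) _ fun x hx => ?_
      obtain ⟨α, hα, rfl⟩ := Finset.mem_image.1 hx
      have h := congrArg (fun w => WittVector.coeff w 0) (hsol α hα)
      simpa [WittVector.iterate_frobenius_coeff, WittVector.mul_coeff_zero] using h
    have hfiber : ∀ x ∈ S.image (fun α => α.coeff 0),
        (S.filter fun α => α.coeff 0 = x).card ≤ p ^ (n * m) := by
      intro x _
      have hmem : ∀ α ∈ S.filter (fun α => α.coeff 0 = x), α ∈ S ∧ α.coeff 0 = x :=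
        fun α hα => Finset.mem_filter.1 hα
      generalize S.filter (fun α => α.coeff 0 = x) = F at hmem ⊢
      have hres : ∀ α ∈ F, ∀ α' ∈ F, α.coeff 0 = α'.coeff 0 := fun α hα α' hα' =>
        (hmem α hα).2.trans (hmem α' hα').2.symm
      have hF : ∀ α ∈ F, ∀ α' ∈ F, α ≠ α' → ¬ ((p : WittVector p k) ^ (n + 1) ∣ α - α') :=
        fun α hα α' hα' => hincong α (hmem α hα).1 α' (hmem α' hα').1
      obtain ⟨T, hcard, hT, hT'⟩ :=
        exists_divided_solutions F (fun α hα => hsol α (hmem α hα).1) hF hres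
      rw [← hcard]
      exact ih T hT hT'
    calc S.card ≤ p ^ (n * m) * (S.image fun α => α.coeff 0).card :=
          Finset.card_le_mul_card_image _ _ hfiber
      _ ≤ p ^ (n * m) * p ^ m := Nat.mul_le_mul_left _ himage
      _ = p ^ ((n + 1) * m) := by rw [← pow_add]; ring_nf
end
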